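/- Let k ≥ 4 be an integer and let H be a 2-contractible ℓ-overlapping k-tree with t edges. Then there exist a₀ > 0 and β > 0, depending only on H, such that for all sufficiently large n the following holds: if F is a k-graph on [n] with |F| = a·C(n,k−1) and a ≥ a₀, then there exists a collection K of copies of H in F such that (1) |K| ≥ β·a·n^{k−1}·(β·a·n^{k−ℓ−1})^{t−1}, and (2) for every set S of edges of F with 1 ≤ |S| ≤ t, d_K(S) ≤ (β·a·n^{k−ℓ−1})^{t−|S|}. -/

import Mathlib

open Finset Filter

attribute [local instance] Classical.propDecidable

/-- The vertex set `[n] = {1,…,n}`. -/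
def vtx (n : ℕ) : Finset ℕ := Finset.Icc 1 n

/-- `F` is a `k`-graph on `[n]`: a family of `k`-element subsets of `[n]`. -/
def IsKGraphOn (k n : ℕ) (F : Finset (Finset ℕ)) : Prop :=
  ∀ E ∈ F, E ⊆ vtx n ∧ E.card = k

/-- The vertex set of a hypergraph (union of its edges). -/
def vertexSet {α : Type} [DecidableEq α] (H : Finset (Finset α)) : Finset α := H.sup id

/-- The degree of a vertex: the number of edges containing it. -/
def vdeg {α : Type} [DecidableEq α] (H : Finset (Finset α)) (v : α) : ℕ :=
  (H.filter fun E => v ∈ E).card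

/-- Hypertrees, defined recursively: a single edge is a hypertree, and a hypertree grows
by adding a new leaf edge `E` whose intersection with the current vertex set equals its
intersection with some existing (parent) edge `F`. -/
inductive IsHypertree {α : Type} [DecidableEq α] : Finset (Finset α) → Prop
  | single (E : Finset α) : IsHypertree {E}
  | grow {H : Finset (Finset α)} (E F : Finset α) (hH : IsHypertree H) (hE : E ∉ H)
      (hF : F ∈ H) (hint : E ∩ vertexSet H = E ∩ F) : IsHypertree (insert E H)

/-- A `k`-tree: a `k`-uniform hypertree. -/
def IsKTree {α : Type} [DecidableEq α] (k : ℕ) (H : Finset (Finset α)) : Prop :=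
  IsHypertree H ∧ ∀ E ∈ H, E.card = k

/-- A hypergraph is 2-contractible if every edge contains at least two vertices of degree 1. -/
def TwoContractible {α : Type} [DecidableEq α] (H : Finset (Finset α)) : Prop :=
  ∀ E ∈ H, 2 ≤ (E.filter fun v => vdeg H v = 1).card

/-- `S` is a cross-cut of `H`: every edge meets `S` in exactly one vertex. -/
def IsCrosscut {α : Type} [DecidableEq α] (H : Finset (Finset α)) (S : Finset α) : Prop :=
  ∀ E ∈ H, (E ∩ S).card = 1

/-- `σ` is the cross-cut number of `H`: the minimum size of a cross-cut. -/
def IsCrosscutNumber {α : Type} [DecidableEq α] (H : Finset (Finset α)) (σ : ℕ) : Prop :=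
  IsLeast {m | ∃ S : Finset α, IsCrosscut H S ∧ S.card = m} σ

/-- A hypergraph is `ℓ`-overlapping if any two distinct edges meet in at most `ℓ` vertices. -/
def Overlapping {α : Type} [DecidableEq α] (ℓ : ℕ) (H : Finset (Finset α)) : Prop :=
  ∀ E ∈ H, ∀ F ∈ H, E ≠ F → (E ∩ F).card ≤ ℓ

/-- `K` is (the edge set of) a copy of `H`, i.e. the image of `H` under a map that is
injective on the vertex set of `H`. -/
def IsCopyOf {α : Type} [DecidableEq α] (H : Finset (Finset α)) (K : Finset (Finset ℕ)) : Prop :=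
  ∃ φ : α → ℕ, Set.InjOn φ ↑(vertexSet H) ∧ K = H.image fun E => E.image φ

/-- `F` contains no subgraph isomorphic to `H`. -/
def HFree {α : Type} [DecidableEq α] (H : Finset (Finset α)) (F : Finset (Finset ℕ)) : Prop :=
  ∀ K ⊆ F, ¬ IsCopyOf H K

/-- The collection of copies of `H` in `F` (as distinct subgraphs of `F`). -/
noncomputable def copies {α : Type} [DecidableEq α] (H : Finset (Finset α))
    (F : Finset (Finset ℕ)) : Finset (Finset (Finset ℕ)) :=
  F.powerset.filter (IsCopyOf H)

/-- The number of `H`-free `k`-graphs on the vertex set `[n]`. -/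
noncomputable def forb {α : Type} [DecidableEq α] (n k : ℕ) (H : Finset (Finset α)) : ℕ :=
  (((vtx n).powersetCard k).powerset.filter (HFree H)).card

/-- `H` is a `k`-uniform linear cycle of length `ℓ`. -/
def IsLinearCycle {α : Type} [DecidableEq α] (k ℓ : ℕ) (H : Finset (Finset α)) : Prop :=
  ∃ E : ℕ → Finset α,
    (∀ i < ℓ, (E i).card = k) ∧
    (∀ i < ℓ, ∀ j < ℓ, i ≠ j → E i ≠ E j) ∧
    (∀ i < ℓ, (E i ∩ E ((i + 1) % ℓ)).card = 1) ∧
    (∀ i < ℓ, ∀ j < ℓ, i ≠ j → E i ∩ E ((i + 1) % ℓ) ≠ E j ∩ E ((j + 1) % ℓ)) ∧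
    (∀ i < ℓ, ∀ j < ℓ, i ≠ j → (i + 1) % ℓ ≠ j → (j + 1) % ℓ ≠ i → Disjoint (E i) (E j)) ∧
    H = (Finset.range ℓ).image E

/-- `(X 0, …, X (k-1))` is a `k`-partition of `F`. -/
def IsKPartition (k : ℕ) (F : Finset (Finset ℕ)) (X : Fin k → Finset ℕ) : Prop :=
  (∀ i j, i ≠ j → Disjoint (X i) (X j)) ∧ ∀ E ∈ F, ∀ i, (E ∩ X i).card = 1

/-- The `J`-projection of an edge. -/
def projJ {k : ℕ} (X : Fin k → Finset ℕ) (J : Finset (Fin k)) (E : Finset ℕ) : Finset ℕ :=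
  E ∩ J.sup X

/-- The pattern of a vertex set. -/
def pattern {k : ℕ} (X : Fin k → Finset ℕ) (D : Finset ℕ) : Finset (Fin k) :=
  Finset.univ.filter fun i => (D ∩ X i).Nonempty

/-- `MI(F)`: the patterns of intersections of pairs of distinct edges. -/
noncomputable def MI {k : ℕ} (F : Finset (Finset ℕ)) (X : Fin k → Finset ℕ) :
    Finset (Finset (Fin k)) :=
  ((F ×ˢ F).filter fun p => p.1 ≠ p.2).image fun p => pattern X (p.1 ∩ p.2)

/-- The link of a vertex set `D` in `F`. -/
def link {α : Type} [DecidableEq α] (F : Finset (Finset α)) (D : Finset α) :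
    Finset (Finset α) :=
  (F.filter fun E => D ⊆ E).image fun E => E \ D

/-- The degree of a vertex set `D` in `F`: the size of its link. -/
def setDeg {α : Type} [DecidableEq α] (F : Finset (Finset α)) (D : Finset α) : ℕ :=
  (link F D).card

/-- A nonempty hypergraph is `s`-diverse if every vertex has degree less than `|H|/s`. -/
def SDiverse {α : Type} [DecidableEq α] (s : ℕ) (H : Finset (Finset α)) : Prop :=
  H.Nonempty ∧ ∀ v : α, s * vdeg H v < H.card

/-- `D` is `s`-strong in `F` if its link is `s`-diverse. -/
def SStrong {α : Type} [DecidableEq α] (s : ℕ) (F : Finset (Finset α)) (D : Finset α) : Prop :=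
  SDiverse s (link F D)

/-- `F`, with `k`-partition `X`, is `s`-super-homogeneous: for every `J ∈ MI(F)` and every
edge `E ∈ F`, the projection `E_J` is `s`-strong and `d_F(E_J) ≥ max{s, |F|/(2k·n^|J|)}`. -/
def SuperHomogeneous (n k s : ℕ) (F : Finset (Finset ℕ)) (X : Fin k → Finset ℕ) : Prop :=
  ∀ J ∈ MI F X, ∀ E ∈ F,
    SStrong s F (projJ X J E) ∧
    s ≤ setDeg F (projJ X J E) ∧
    (F.card : ℝ) / (2 * k * (n : ℝ) ^ J.card) ≤ (setDeg F (projJ X J E) : ℝ)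

/-- The rank of a family of subsets of `[k]`: the minimum size of a set `D ⊆ [k]` contained
in no member of the family. -/
noncomputable def rankFam (k : ℕ) (𝒥 : Finset (Finset (Fin k))) : ℕ :=
  sInf {d | ∃ D : Finset (Fin k), D.card = d ∧ ∀ J ∈ 𝒥, ¬ D ⊆ J}

/-- A family of subsets of `[k]` is of type 1 if it contains the full power set of some
`(k-2)`-set `B`. -/
def TypeOne (k : ℕ) (𝒥 : Finset (Finset (Fin k))) : Prop :=
  ∃ B : Finset (Fin k), B.card = k - 2 ∧ ∀ S ⊆ B, S ∈ 𝒥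

/-- The constant `c(k,s) = k!/(k^k·(2s(1+2^k))^(2^k))`. -/
noncomputable def cks (k s : ℕ) : ℝ :=
  (Nat.factorial k : ℝ) / ((k : ℝ) ^ k * (2 * (s : ℝ) * (1 + 2 ^ k)) ^ (2 ^ k))

/-- Degree of a set of vertices in a (uniform) hypergraph `K`: number of edges containing it. -/
def uDeg {α : Type} [DecidableEq α] (K : Finset (Finset α)) (S : Finset α) : ℕ :=
  (K.filter fun e => S ⊆ e).card

/-- A `t`-uniform hypergraph is `d`-graded if `d_K(S) ≤ d^(t-|S|)` for all `S` with
`1 ≤ |S| ≤ t`. -/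
def Graded {α : Type} [DecidableEq α] (t : ℕ) (d : ℝ) (K : Finset (Finset α)) : Prop :=
  ∀ S : Finset α, 1 ≤ S.card → S.card ≤ t → (uDeg K S : ℝ) ≤ d ^ (t - S.card)

/-- `S` is saturated by `K`: `d_K(S) = ⌊d^(t-|S|)⌋`. -/
def Saturated {α : Type} [DecidableEq α] (t : ℕ) (d : ℝ) (K : Finset (Finset α))
    (S : Finset α) : Prop :=
  uDeg K S = ⌊d ^ (t - S.card)⌋₊

/-- `S` is admissible: no nonempty subset of `S` is saturated. -/
def Admissible {α : Type} [DecidableEq α] (t : ℕ) (d : ℝ) (K : Finset (Finset α))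
    (S : Finset α) : Prop :=
  ∀ S' ⊆ S, S'.Nonempty → ¬ Saturated t d K S'

/-- `Z_K(S)`: the vertices `v` such that `S ∪ {v}` is inadmissible and `{v}` is not
saturated. -/
noncomputable def Zset {α : Type} [DecidableEq α] (t : ℕ) (d : ℝ) (K : Finset (Finset α))
    (S : Finset α) : Finset α :=
  (vertexSet K).filter fun v => ¬ Admissible t d K (insert v S) ∧ ¬ Saturated t d K {v}

/-- `ex(G,H)`: the maximum number of edges of an `H`-free subgraph of `G`. -/
noncomputable def exIn {α : Type} [DecidableEq α] (H : Finset (Finset α))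
    (G : Finset (Finset ℕ)) : ℕ :=
  (G.powerset.filter (HFree H)).sup Finset.card

/-- The probability, in the random `k`-graph `G^(k)(n,p)` (each `k`-subset of `[n]` is an
edge independently with probability `p`), of the event `A`. -/
noncomputable def probEvent (k n : ℕ) (p : ℝ) (A : Finset (Finset ℕ) → Prop) : ℝ :=
  ∑ G ∈ ((vtx n).powersetCard k).powerset.filter A,
    p ^ G.card * (1 - p) ^ (((vtx n).powersetCard k).card - G.card)


/-- Extending a partial embedding along one new edge. -/
lemma extend_map {α : Type} [DecidableEq α] (V E : Finset α) (φ : α → ℕ)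
    (hφ : Set.InjOn φ (V : Set α)) (E' : Finset ℕ) (hc : E.card = E'.card)
    (hD : ∀ v ∈ E, v ∈ V → φ v ∈ E')
    (hW : ∀ v ∈ V, v ∉ E → φ v ∉ E') :
    ∃ ψ : α → ℕ, (∀ v ∈ V, ψ v = φ v) ∧ (∀ v, v ∈ V ∨ v ∈ E → ∀ w, w ∈ V ∨ w ∈ E →
      ψ v = ψ w → v = w) ∧ E.image ψ = E' := by
  have hsub : (E ∩ V).image φ ⊆ E' := by
    intro y hy
    obtain ⟨v, hv, rfl⟩ := Finset.mem_image.1 hy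
    rw [Finset.mem_inter] at hv
    exact hD v hv.1 hv.2
  have hci : ((E ∩ V).image φ).card = (E ∩ V).card := by
    apply Finset.card_image_of_injOn
    intro v hv w hw h
    have hv' := Finset.mem_coe.1 hv
    have hw' := Finset.mem_coe.1 hw
    rw [Finset.mem_inter] at hv' hw'
    exact hφ (Finset.mem_coe.2 hv'.2) (Finset.mem_coe.2 hw'.2) h
  have hcard : (E \ V).card = (E' \ (E ∩ V).image φ).card := by
    have h1 := Finset.card_sdiff_add_card_inter E V
    have h2 := Finset.card_sdiff_add_card_eq_card hsub
    omega
  let e := Finset.equivOfCardEq hcard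
  let ψ : α → ℕ := fun v => if h : v ∈ E \ V then (e ⟨v, h⟩ : ℕ) else φ v
  have hV : ∀ v ∈ V, ψ v = φ v := by
    intro v hv
    have : v ∉ E \ V := by simp [hv]
    simp only [ψ, dif_neg this]
  have hN : ∀ v (h : v ∈ E \ V), ψ v = (e ⟨v, h⟩ : ℕ) := by
    intro v h
    simp only [ψ, dif_pos h]
  have hN' : ∀ v (h : v ∈ E \ V), ψ v ∈ E' ∧ ψ v ∉ (E ∩ V).image φ := by
    intro v h
    rw [hN v h]
    exact Finset.mem_sdiff.1 (e ⟨v, h⟩).2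
  have hcross : ∀ v ∈ V, ∀ w, w ∈ E → w ∉ V → ψ v ≠ ψ w := by
    intro v hv w hw hwV h
    have hw' : w ∈ E \ V := Finset.mem_sdiff.2 ⟨hw, hwV⟩
    obtain ⟨h1, h2⟩ := hN' w hw'
    rw [← h, hV v hv] at h1 h2
    by_cases hvE : v ∈ E
    · exact h2 (Finset.mem_image.2 ⟨v, Finset.mem_inter.2 ⟨hvE, hv⟩, rfl⟩)
    · exact hW v hv hvE h1
  have hinj : ∀ v, v ∈ V ∨ v ∈ E → ∀ w, w ∈ V ∨ w ∈ E → ψ v = ψ w → v = w := by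
    intro v hv w hw h
    by_cases hvV : v ∈ V
    · by_cases hwV : w ∈ V
      · rw [hV v hvV, hV w hwV] at h
        exact hφ (Finset.mem_coe.2 hvV) (Finset.mem_coe.2 hwV) h
      · exact absurd h (hcross v hvV w (hw.resolve_left hwV) hwV)
    · by_cases hwV : w ∈ V
      · exact absurd h.symm (hcross w hwV v (hv.resolve_left hvV) hvV)
      · have hv' : v ∈ E \ V := Finset.mem_sdiff.2 ⟨hv.resolve_left hvV, hvV⟩
        have hw' : w ∈ E \ V := Finset.mem_sdiff.2 ⟨hw.resolve_left hwV, hwV⟩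
        rw [hN v hv', hN w hw'] at h
        have h3 := e.injective (Subtype.ext h)
        exact congrArg Subtype.val h3
  refine ⟨ψ, hV, hinj, ?_⟩
  apply Finset.eq_of_subset_of_card_le
  · intro y hy
    obtain ⟨v, hv, rfl⟩ := Finset.mem_image.1 hy
    by_cases hvV : v ∈ V
    · rw [hV v hvV]; exact hD v hv hvV
    · exact (hN' v (Finset.mem_sdiff.2 ⟨hv, hvV⟩)).1
  · rw [Finset.card_image_of_injOn, hc]
    intro v hv w hw h
    exact hinj v (Or.inr hv) w (Or.inr hw) h

lemma mem_vertexSet {α : Type} [DecidableEq α] (H : Finset (Finset α)) (v : α) :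
    v ∈ vertexSet H ↔ ∃ E ∈ H, v ∈ E := by
  simp [vertexSet, Finset.mem_sup]

lemma card_vertexSet_le {α : Type} [DecidableEq α] (k : ℕ) (H : Finset (Finset α))
    (h : ∀ E ∈ H, E.card = k) : (vertexSet H).card ≤ H.card * k := by
  have : vertexSet H = H.biUnion id := by
    ext v; simp [mem_vertexSet]
  rw [this]
  exact Finset.card_biUnion_le_card_mul _ _ _ (fun E hE => (h E hE).le)

/-- Greedy embedding of a hypertree, with an abstract extension property. -/
lemma embed {α : Type} [DecidableEq α] (k ℓ t : ℕ) (G : Finset (Finset ℕ))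
    (hGk : ∀ E ∈ G, E.card = k) (hG : G.Nonempty)
    (P : Finset (Finset ℕ) → Prop) (hP1 : ∀ E ∈ G, P {E})
    (hext : ∀ E ∈ G, ∀ D ⊆ E, D.card ≤ ℓ → D.card < k → ∀ W : Finset ℕ, W.card ≤ t * k →
      Disjoint W D → ∀ T ⊆ G, T.card < t → P T →
      ∃ E' ∈ G, D ⊆ E' ∧ Disjoint W E' ∧ P (insert E' T))
    (H : Finset (Finset α)) (hH : IsHypertree H) :
    (∀ E ∈ H, E.card = k) → Overlapping ℓ H → H.card ≤ t →
    ∃ φ : α → ℕ, Set.InjOn φ ↑(vertexSet H) ∧ (H.image fun E => E.image φ) ⊆ G ∧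
      P (H.image fun E => E.image φ) := by
  induction hH with
  | single E =>
    intro hu _ _
    obtain ⟨E', hE'⟩ := hG
    obtain ⟨ψ, _, hinj, him⟩ := extend_map (∅ : Finset α) E (fun _ => 0) (by simp) E'
      ((hu E (by simp)).trans (hGk E' hE').symm) (by simp) (by simp)
    refine ⟨ψ, ?_, ?_, ?_⟩
    · intro v hv w hw h
      have hv' := (mem_vertexSet _ _).1 (Finset.mem_coe.1 hv)
      have hw' := (mem_vertexSet _ _).1 (Finset.mem_coe.1 hw)
      simp only [Finset.mem_singleton, exists_eq_left] at hv' hw'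
      exact hinj v (Or.inr hv') w (Or.inr hw') h
    · rw [Finset.image_singleton, him]
      simpa using hE'
    · rw [Finset.image_singleton, him]
      exact hP1 E' hE'
  | @grow H E Q hH hE hQ hint ih =>
    intro hu hov hcard
    have hcard' : H.card + 1 ≤ t := by
      rwa [Finset.card_insert_of_notMem hE] at hcard
    obtain ⟨φ, hφ, hsub, hPφ⟩ := ih (fun A hA => hu A (Finset.mem_insert_of_mem hA))
      (fun A hA B hB => hov A (Finset.mem_insert_of_mem hA) B (Finset.mem_insert_of_mem hB))
      (by omega)
    have hEQ : E ≠ Q := fun h => hE (h ▸ hQ)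
    have hEk := hu E (Finset.mem_insert_self _ _)
    have hQk := hu Q (Finset.mem_insert_of_mem hQ)
    have hDl : (E ∩ Q).card ≤ ℓ :=
      hov E (Finset.mem_insert_self _ _) Q (Finset.mem_insert_of_mem hQ) hEQ
    have hDk : (E ∩ Q).card < k := by
      rw [← hEk]
      apply Finset.card_lt_card
      refine ⟨Finset.inter_subset_left, fun h => hEQ ?_⟩
      apply Finset.eq_of_subset_of_card_le
      · exact h.trans Finset.inter_subset_right
      · omega
    have hmemV : ∀ v ∈ E, v ∈ vertexSet H → v ∈ Q := by
      intro v hv hvV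
      have : v ∈ E ∩ vertexSet H := Finset.mem_inter.2 ⟨hv, hvV⟩
      rw [hint] at this
      exact (Finset.mem_inter.1 this).2
    have hQV : ∀ v ∈ Q, v ∈ vertexSet H := fun v hv => (mem_vertexSet _ _).2 ⟨Q, hQ, hv⟩
    obtain ⟨E', hE', hDE', hWE', hPnew⟩ := hext (Q.image φ)
      (hsub (Finset.mem_image.2 ⟨Q, hQ, rfl⟩)) ((E ∩ Q).image φ)
      (Finset.image_subset_image Finset.inter_subset_right)
      (Finset.card_image_le.trans hDl) (Finset.card_image_le.trans_lt hDk)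
      ((vertexSet H).image φ \ (E ∩ Q).image φ)
      (by
        refine (Finset.card_le_card Finset.sdiff_subset).trans (Finset.card_image_le.trans ?_)
        refine (card_vertexSet_le k H
          (fun A hA => hu A (Finset.mem_insert_of_mem hA))).trans ?_
        exact Nat.mul_le_mul_right _ (by omega))
      Finset.sdiff_disjoint
      (H.image fun E => E.image φ) hsub (Finset.card_image_le.trans_lt (by omega)) hPφ
    obtain ⟨ψ, hψV, hinj, him⟩ := extend_map (vertexSet H) E φ hφ E'
      (hEk.trans (hGk E' hE').symm)
      (fun v hv hvV => hDE' (Finset.mem_image.2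
        ⟨v, Finset.mem_inter.2 ⟨hv, hmemV v hv hvV⟩, rfl⟩))
      (by
        intro v hvV hvE hvE'
        refine Finset.disjoint_left.1 hWE' (Finset.mem_sdiff.2
          ⟨Finset.mem_image.2 ⟨v, hvV, rfl⟩, ?_⟩) hvE'
        intro hm
        obtain ⟨w, hw, hwv⟩ := Finset.mem_image.1 hm
        rw [Finset.mem_inter] at hw
        have := hφ (Finset.mem_coe.2 (hQV w hw.2)) (Finset.mem_coe.2 hvV) hwv
        exact hvE (this ▸ hw.1))
    have hcong : (H.image fun E => E.image ψ) = H.image fun E => E.image φ := by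
      apply Finset.image_congr
      intro A hA
      apply Finset.image_congr
      intro v hv
      exact hψV v ((mem_vertexSet _ _).2 ⟨A, hA, hv⟩)
    refine ⟨ψ, ?_, ?_, ?_⟩
    · intro v hv w hw h
      have key : ∀ v, v ∈ vertexSet (insert E H) → v ∈ vertexSet H ∨ v ∈ E := by
        intro v hv
        obtain ⟨A, hA, hvA⟩ := (mem_vertexSet _ _).1 hv
        rcases Finset.mem_insert.1 hA with rfl | hA
        · exact Or.inr hvA
        · exact Or.inl ((mem_vertexSet _ _).2 ⟨A, hA, hvA⟩)
      exact hinj v (key v hv) w (key w hw) h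
    · rw [Finset.image_insert, hcong, him]
      exact Finset.insert_subset hE' hsub
    · rw [Finset.image_insert, hcong, him]
      exact hPnew

/-- Cleaning: find a nonempty subfamily all of whose shadows have large degree. -/
lemma clean (k n : ℕ) (F : Finset (Finset ℕ)) (hF : IsKGraphOn k n F) (x : ℝ) (hx : 0 ≤ x)
    (hbig : (k : ℝ) * x * (n : ℝ) ^ (k - 1) < (F.card : ℝ)) :
    ∃ G ⊆ F, G.Nonempty ∧ ∀ E ∈ G, ∀ D ⊆ E, D.card < k →
      x * (n : ℝ) ^ (k - 1 - D.card) ≤ ((G.filter fun E' => D ⊆ E').card : ℝ) := by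
  let U : Finset (Finset ℕ) := (vtx n).powerset.filter fun D => D.card < k
  let wt : Finset ℕ → ℝ := fun D => x * (n : ℝ) ^ (k - 1 - D.card)
  have hwt : ∀ D, 0 ≤ wt D := fun D => by positivity
  let sh : Finset (Finset ℕ) → Finset (Finset ℕ) := fun G => U.filter fun D => ∃ E ∈ G, D ⊆ E
  let w : Finset (Finset ℕ) → ℝ := fun G => (G.card : ℝ) - ∑ D ∈ sh G, wt D
  have hU : ∑ D ∈ U, wt D ≤ (k : ℝ) * x * (n : ℝ) ^ (k - 1) := by
    have hmaps : ∀ D ∈ U, D.card ∈ Finset.range k := by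
      intro D hD
      exact Finset.mem_range.2 (Finset.mem_filter.1 hD).2
    rw [← Finset.sum_fiberwise_of_maps_to hmaps]
    have : ∀ j ∈ Finset.range k, ∑ D ∈ U.filter (fun D => D.card = j), wt D
        ≤ x * (n : ℝ) ^ (k - 1) := by
      intro j hj
      have hjk := Finset.mem_range.1 hj
      have h1 : ∑ D ∈ U.filter (fun D => D.card = j), wt D
          = ((U.filter (fun D => D.card = j)).card : ℝ) * (x * (n : ℝ) ^ (k - 1 - j)) := by
        rw [← nsmul_eq_mul, ← Finset.sum_const]
        apply Finset.sum_congr rfl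
        intro D hD
        simp only [wt, (Finset.mem_filter.1 hD).2]
      have h2 : (U.filter (fun D => D.card = j)).card ≤ n ^ j := by
        calc _ ≤ ((vtx n).powersetCard j).card := by
              apply Finset.card_le_card
              intro D hD
              obtain ⟨hD1, hD2⟩ := Finset.mem_filter.1 hD
              exact Finset.mem_powersetCard.2
                ⟨Finset.mem_powerset.1 (Finset.mem_filter.1 hD1).1, hD2⟩
          _ = n.choose j := by simp [vtx]
          _ ≤ n ^ j := Nat.choose_le_pow n j
      have h3 : ((U.filter (fun D => D.card = j)).card : ℝ) ≤ (n : ℝ) ^ j := by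
        exact_mod_cast h2
      rw [h1]
      calc _ ≤ (n : ℝ) ^ j * (x * (n : ℝ) ^ (k - 1 - j)) :=
            mul_le_mul_of_nonneg_right h3 (by positivity)
        _ = x * ((n : ℝ) ^ (j + (k - 1 - j))) := by rw [pow_add]; ring
        _ = x * (n : ℝ) ^ (k - 1) := by
            congr 2; omega
    refine (Finset.sum_le_sum this).trans ?_
    rw [Finset.sum_const, Finset.card_range, nsmul_eq_mul, mul_assoc]
  have hwF : 0 < w F := by
    have : ∑ D ∈ sh F, wt D ≤ ∑ D ∈ U, wt D :=
      Finset.sum_le_sum_of_subset_of_nonneg (Finset.filter_subset _ _) (fun D _ _ => hwt D)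
    simp only [w]
    linarith
  obtain ⟨G, hG, hmax⟩ := Finset.exists_max_image F.powerset w
    ⟨F, Finset.mem_powerset_self F⟩
  have hGF := Finset.mem_powerset.1 hG
  have hwG : 0 < w G := hwF.trans_le (hmax F (Finset.mem_powerset_self F))
  refine ⟨G, hGF, ?_, ?_⟩
  · rw [Finset.nonempty_iff_ne_empty]
    rintro rfl
    simp [w, sh] at hwG
  · intro E hE D hDE hDk
    by_contra hlt
    push Not at hlt
    let G' := G.filter fun E' => ¬ D ⊆ E'
    have hG' : G' ∈ F.powerset :=
      Finset.mem_powerset.2 ((Finset.filter_subset _ _).trans hGF)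
    have hle := hmax G' hG'
    have hcard : (G.filter fun E' => D ⊆ E').card + G'.card = G.card :=
      Finset.card_filter_add_card_filter_not _
    have hcardR : ((G.filter fun E' => D ⊆ E').card : ℝ) + G'.card = G.card := by
      exact_mod_cast hcard
    have hDsh : D ∈ sh G := by
      refine Finset.mem_filter.2 ⟨Finset.mem_filter.2 ⟨Finset.mem_powerset.2 ?_, hDk⟩, E, hE, hDE⟩
      exact hDE.trans (hF E (hGF hE)).1
    have hDnot : D ∉ sh G' := by
      intro h
      obtain ⟨E', hE', hDE'⟩ := (Finset.mem_filter.1 h).2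
      exact (Finset.mem_filter.1 hE').2 hDE'
    have hsub : insert D (sh G') ⊆ sh G := by
      apply Finset.insert_subset hDsh
      intro D' hD'
      obtain ⟨h1, E', hE', h2⟩ := Finset.mem_filter.1 hD'
      exact Finset.mem_filter.2 ⟨h1, E', (Finset.mem_filter.1 hE').1, h2⟩
    have hsum : ∑ D' ∈ insert D (sh G'), wt D' ≤ ∑ D' ∈ sh G, wt D' :=
      Finset.sum_le_sum_of_subset_of_nonneg hsub (fun D _ _ => hwt D)
    rw [Finset.sum_insert hDnot] at hsum
    simp only [w] at hle
    have : wt D = x * (n : ℝ) ^ (k - 1 - D.card) := rfl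
    linarith

/-- Double counting: sum of co-degrees. -/
lemma sum_uDeg_le (t : ℕ) (K : Finset (Finset (Finset ℕ))) (hK : ∀ A ∈ K, A.card = t)
    (T Y : Finset (Finset ℕ)) :
    ∑ v ∈ Y, uDeg K (insert v T) ≤ uDeg K T * t := by
  have h1 : ∀ v ∈ Y, uDeg K (insert v T)
      = ∑ A ∈ K.filter (fun A => T ⊆ A), if v ∈ A then 1 else 0 := by
    intro v _
    rw [← Finset.card_filter, Finset.filter_filter]
    unfold uDeg
    congr 1
    ext A
    simp only [Finset.mem_filter, Finset.insert_subset_iff]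
    tauto
  rw [Finset.sum_congr rfl h1, Finset.sum_comm]
  have h2 : ∀ A ∈ K.filter (fun A => T ⊆ A), (∑ v ∈ Y, if v ∈ A then 1 else 0) ≤ t := by
    intro A hA
    rw [← Finset.card_filter, ← hK A (Finset.mem_filter.1 hA).1]
    apply Finset.card_le_card
    intro v hv
    exact (Finset.mem_filter.1 hv).2
  refine (Finset.sum_le_sum h2).trans ?_
  rw [Finset.sum_const, smul_eq_mul]
  rfl

/-- `S` can no longer be used. -/
def Full (t : ℕ) (d : ℝ) (K : Finset (Finset (Finset ℕ))) (S : Finset (Finset ℕ)) : Prop :=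
  d ^ (t - S.card) < (uDeg K S : ℝ) + 1

/-- No nonempty subset is full. -/
def Adm (t : ℕ) (d : ℝ) (K : Finset (Finset (Finset ℕ))) (S : Finset (Finset ℕ)) : Prop :=
  ∀ T ⊆ S, T.Nonempty → ¬ Full t d K T

lemma Full.le {t : ℕ} {d : ℝ} (hd : 1 ≤ d) {K : Finset (Finset (Finset ℕ))}
    {S : Finset (Finset ℕ)} (h : Full t d K S) : d ^ (t - S.card) ≤ 2 * (uDeg K S : ℝ) := by
  unfold Full at h
  have h1 : (1 : ℝ) ≤ d ^ (t - S.card) := one_le_pow₀ hd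
  have h2 : (0 : ℝ) < uDeg K S := by linarith
  have h3 : (1 : ℝ) ≤ uDeg K S := by
    exact_mod_cast h2
  linarith

/-- The number of `v` with `insert v T` full. -/
lemma full_count (t : ℕ) (d : ℝ) (hd : 1 ≤ d) (K : Finset (Finset (Finset ℕ)))
    (hK : ∀ A ∈ K, A.card = t) (T Y : Finset (Finset ℕ))
    (hY : ∀ v ∈ Y, v ∉ T ∧ Full t d K (insert v T)) :
    (Y.card : ℝ) * d ^ (t - (T.card + 1)) ≤ 2 * t * (uDeg K T : ℝ) := by
  have h1 : ∀ v ∈ Y, d ^ (t - (T.card + 1)) ≤ 2 * (uDeg K (insert v T) : ℝ) := by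
    intro v hv
    have := (hY v hv).2.le hd
    rwa [Finset.card_insert_of_notMem (hY v hv).1] at this
  have h2 := Finset.sum_le_sum h1
  rw [Finset.sum_const, nsmul_eq_mul, ← Finset.mul_sum] at h2
  have h3 : ((∑ v ∈ Y, uDeg K (insert v T) : ℕ) : ℝ) ≤ ((uDeg K T * t : ℕ) : ℝ) := by
    exact_mod_cast sum_uDeg_le t K hK T Y
  push_cast at h3
  linarith

/-- Bound on the number of non-full `v` that make `S` inadmissible. -/
lemma bad_count (t : ℕ) (d : ℝ) (hd : 1 ≤ d) (K : Finset (Finset (Finset ℕ)))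
    (hK : ∀ A ∈ K, A.card = t) (G S : Finset (Finset ℕ)) (hSG : S ⊆ G) (hSt : S.card < t)
    (hgr : ∀ T : Finset (Finset ℕ), T ⊆ G → 1 ≤ T.card → T.card ≤ t →
      (uDeg K T : ℝ) ≤ d ^ (t - T.card))
    (hG : ∀ v ∈ G, ¬ Full t d K {v}) (hS : Adm t d K S) :
    ((G.filter fun v => ¬ Adm t d K (insert v S)).card : ℝ) ≤ 2 ^ t * (2 * t * d) := by
  let Y : Finset (Finset ℕ) → Finset (Finset ℕ) :=
    fun T => G.filter fun v => v ∉ T ∧ Full t d K (insert v T)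
  have hsub : (G.filter fun v => ¬ Adm t d K (insert v S)) ⊆
      (S.powerset.filter fun T => T.Nonempty).biUnion Y := by
    intro v hv
    obtain ⟨hvG, hvA⟩ := Finset.mem_filter.1 hv
    unfold Adm at hvA
    push Not at hvA
    obtain ⟨T', hT', hne, hfull⟩ := hvA
    have hvT' : v ∈ T' := by
      by_contra hn
      exact hS T' ((Finset.subset_insert_iff_of_notMem hn).1 hT') hne hfull
    have hins : insert v (T'.erase v) = T' := Finset.insert_erase hvT'
    refine Finset.mem_biUnion.2 ⟨T'.erase v, Finset.mem_filter.2
      ⟨Finset.mem_powerset.2 (Finset.subset_insert_iff.1 hT'), ?_⟩,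
      Finset.mem_filter.2 ⟨hvG, Finset.notMem_erase v T', by rwa [hins]⟩⟩
    rw [Finset.nonempty_iff_ne_empty]
    intro he
    rw [he] at hins
    apply hG v hvG
    rw [← hins] at hfull
    simpa using hfull
  have hY : ∀ T ∈ S.powerset.filter (fun T => T.Nonempty), ((Y T).card : ℝ) ≤ 2 * t * d := by
    intro T hT
    obtain ⟨hTS, hTne⟩ := Finset.mem_filter.1 hT
    rw [Finset.mem_powerset] at hTS
    have hTt : T.card < t := (Finset.card_le_card hTS).trans_lt hSt
    have h1 := full_count t d hd K hK T (Y T) (fun v hv => (Finset.mem_filter.1 hv).2)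
    have h2 := hgr T (hTS.trans hSG) hTne.card_pos hTt.le
    have h3 : d ^ (t - T.card) = d * d ^ (t - (T.card + 1)) := by
      rw [← pow_succ']; congr 1; omega
    rw [h3] at h2
    have hpos : 0 < d ^ (t - (T.card + 1)) := by positivity
    have ht0 : (0 : ℝ) ≤ 2 * t := by positivity
    have h4 := mul_le_mul_of_nonneg_left h2 ht0
    exact le_of_mul_le_mul_right (by linarith) hpos
  have hc : (S.powerset.filter fun T => T.Nonempty).card ≤ 2 ^ t := by
    refine (Finset.card_filter_le _ _).trans ?_
    rw [Finset.card_powerset]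
    exact Nat.pow_le_pow_right (by norm_num) hSt.le
  have hcR : ((S.powerset.filter fun T => T.Nonempty).card : ℝ) ≤ 2 ^ t := by exact_mod_cast hc
  calc _ ≤ (((S.powerset.filter fun T => T.Nonempty).biUnion Y).card : ℝ) := by
        exact_mod_cast Finset.card_le_card hsub
    _ ≤ ∑ T ∈ S.powerset.filter (fun T => T.Nonempty), ((Y T).card : ℝ) := by
        exact_mod_cast Finset.card_biUnion_le
    _ ≤ ((S.powerset.filter fun T => T.Nonempty).card : ℝ) * (2 * t * d) := by
        refine (Finset.sum_le_sum hY).trans ?_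
        rw [Finset.sum_const, nsmul_eq_mul]
    _ ≤ _ := mul_le_mul_of_nonneg_right hcR (by positivity)

/-- Trivial degree bound. -/
lemma deg_le (k n : ℕ) (G : Finset (Finset ℕ)) (hG : IsKGraphOn k n G) (D : Finset ℕ) (v : ℕ)
    (hv : v ∉ D) :
    (G.filter fun E => D ⊆ E ∧ v ∈ E).card ≤ n ^ (k - 1 - D.card) := by
  calc _ ≤ ((vtx n).powersetCard (k - 1 - D.card)).card := by
        apply Finset.card_le_card_of_injOn (fun E => E \ insert v D)
        · intro E hE
          obtain ⟨hEG, hD, hvE⟩ := Finset.mem_filter.1 (Finset.mem_coe.1 hE)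
          have hsub : insert v D ⊆ E := Finset.insert_subset hvE hD
          refine Finset.mem_coe.2 (Finset.mem_powersetCard.2
            ⟨Finset.sdiff_subset.trans (hG E hEG).1, ?_⟩)
          rw [Finset.card_sdiff_of_subset hsub, Finset.card_insert_of_notMem hv, (hG E hEG).2]
          omega
        · intro E hE E' hE' h
          obtain ⟨_, hD, hvE⟩ := Finset.mem_filter.1 (Finset.mem_coe.1 hE)
          obtain ⟨_, hD', hvE'⟩ := Finset.mem_filter.1 (Finset.mem_coe.1 hE')
          have h1 := Finset.sdiff_union_of_subset (Finset.insert_subset hvE hD)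
          have h2 := Finset.sdiff_union_of_subset (Finset.insert_subset hvE' hD')
          simp only at h
          rw [← h1, ← h2, h]
    _ = n.choose (k - 1 - D.card) := by simp [vtx]
    _ ≤ _ := Nat.choose_le_pow _ _

/-- The extension property. -/
lemma extension (k ℓ t n : ℕ) (hn : 1 ≤ n) (G : Finset (Finset ℕ)) (hG : IsKGraphOn k n G)
    (x b : ℝ) (hb : 0 ≤ b) (hx : (t * k : ℕ) + b < x)
    (hdeg : ∀ E ∈ G, ∀ D ⊆ E, D.card < k →
      x * (n : ℝ) ^ (k - 1 - D.card) ≤ ((G.filter fun E' => D ⊆ E').card : ℝ))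
    (P : Finset (Finset ℕ) → Prop)
    (hP : ∀ T ⊆ G, T.card < t → P T →
      ((G.filter fun v => ¬ P (insert v T)).card : ℝ) ≤ b * (n : ℝ) ^ (k - ℓ - 1)) :
    ∀ E ∈ G, ∀ D ⊆ E, D.card ≤ ℓ → D.card < k → ∀ W : Finset ℕ, W.card ≤ t * k →
      Disjoint W D → ∀ T ⊆ G, T.card < t → P T →
      ∃ E' ∈ G, D ⊆ E' ∧ Disjoint W E' ∧ P (insert E' T) := by
  intro E hE D hDE hDl hDk W hW hWD T hT hTt hPT
  by_contra hno
  push Not at hno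
  have h1 := hdeg E hE D hDE hDk
  have h2 := hP T hT hTt hPT
  have hsub : (G.filter fun E' => D ⊆ E') ⊆
      (W.biUnion fun v => G.filter fun E' => D ⊆ E' ∧ v ∈ E') ∪
        (G.filter fun v => ¬ P (insert v T)) := by
    intro E' hE'
    obtain ⟨hE'G, hDE'⟩ := Finset.mem_filter.1 hE'
    by_cases hdis : Disjoint W E'
    · exact Finset.mem_union_right _ (Finset.mem_filter.2 ⟨hE'G, hno E' hE'G hDE' hdis⟩)
    · obtain ⟨v, hvW, hvE'⟩ := Finset.not_disjoint_iff.1 hdis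
      exact Finset.mem_union_left _ (Finset.mem_biUnion.2
        ⟨v, hvW, Finset.mem_filter.2 ⟨hE'G, hDE', hvE'⟩⟩)
  have h3 : (W.biUnion fun v => G.filter fun E' => D ⊆ E' ∧ v ∈ E').card
      ≤ W.card * n ^ (k - 1 - D.card) :=
    Finset.card_biUnion_le_card_mul _ _ _
      (fun v hv => deg_le k n G hG D v (Finset.disjoint_left.1 hWD hv))
  have h4 : (G.filter fun E' => D ⊆ E').card ≤ (t * k) * n ^ (k - 1 - D.card) +
      (G.filter fun v => ¬ P (insert v T)).card :=
    (Finset.card_le_card hsub).trans ((Finset.card_union_le _ _).trans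
      (Nat.add_le_add_right (h3.trans (Nat.mul_le_mul_right _ hW)) _))
  have h5 : ((G.filter fun E' => D ⊆ E').card : ℝ) ≤
      ((t * k : ℕ) : ℝ) * (n : ℝ) ^ (k - 1 - D.card) +
      ((G.filter fun v => ¬ P (insert v T)).card : ℝ) := by exact_mod_cast h4
  have hnR : (1 : ℝ) ≤ n := by exact_mod_cast hn
  have h6 : (n : ℝ) ^ (k - ℓ - 1) ≤ (n : ℝ) ^ (k - 1 - D.card) :=
    pow_le_pow_right₀ hnR (by omega)
  have h7 := mul_le_mul_of_nonneg_left h6 hb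
  have hpos : (0 : ℝ) < (n : ℝ) ^ (k - 1 - D.card) := by positivity
  have h8 := mul_lt_mul_of_pos_right hx hpos
  linarith

lemma copy_card {α : Type} [DecidableEq α] (H : Finset (Finset α)) (φ : α → ℕ)
    (hφ : Set.InjOn φ ↑(vertexSet H)) : (H.image fun E => E.image φ).card = H.card := by
  apply Finset.card_image_of_injOn
  have key : ∀ A ∈ H, ∀ B ∈ H, A.image φ = B.image φ → A ⊆ B := by
    intro A hA B hB h v hv
    have h1 : φ v ∈ B.image φ := h ▸ Finset.mem_image.2 ⟨v, hv, rfl⟩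
    obtain ⟨w, hw, hwv⟩ := Finset.mem_image.1 h1
    have := hφ (Finset.mem_coe.2 ((mem_vertexSet _ _).2 ⟨B, hB, hw⟩))
      (Finset.mem_coe.2 ((mem_vertexSet _ _).2 ⟨A, hA, hv⟩)) hwv
    exact this ▸ hw
  intro A hA B hB h
  exact Finset.Subset.antisymm (key A hA B hB h) (key B hB A hA h.symm)

lemma uDeg_insert_le (K : Finset (Finset (Finset ℕ))) (A S : Finset (Finset ℕ)) :
    uDeg (insert A K) S ≤ uDeg K S + 1 ∧ (¬ S ⊆ A → uDeg (insert A K) S = uDeg K S) := by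
  unfold uDeg
  rw [Finset.filter_insert]
  constructor
  · split_ifs
    · exact Finset.card_insert_le _ _
    · omega
  · intro h
    rw [if_neg h]

/-- balanced supersaturation, dense case: for a 2-contractible
`ℓ`-overlapping `k`-tree `H` with `t` edges there exist `a₀, β` such that any `k`-graph
with `a·C(n,k−1)` edges, `a ≥ a₀`, contains a collection `K` of copies of `H` with
`|K| ≥ β·a·n^{k−1}·(β·a·n^{k−ℓ−1})^{t−1}` and `d_K(S) ≤ (β·a·n^{k−ℓ−1})^{t−|S|}`. -/
theorem stmt_14 {α : Type} [DecidableEq α] (k ℓ t : ℕ) (hk : 4 ≤ k)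
    (H : Finset (Finset α)) (hH : IsKTree k H) (h2 : TwoContractible H)
    (hov : Overlapping ℓ H) (hte : H.card = t) :
    ∃ a₀ β : ℝ, 0 < a₀ ∧ 0 < β ∧ ∃ n₀ : ℕ, ∀ n ≥ n₀,
      ∀ F : Finset (Finset ℕ), ∀ a : ℝ, IsKGraphOn k n F →
      (F.card : ℝ) = a * (n.choose (k - 1) : ℝ) → a₀ ≤ a →
      ∃ K : Finset (Finset (Finset ℕ)),
        (∀ A ∈ K, A ⊆ F ∧ IsCopyOf H A) ∧
        β * a * (n : ℝ) ^ (k - 1) * (β * a * (n : ℝ) ^ (k - ℓ - 1)) ^ (t - 1)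
          ≤ (K.card : ℝ) ∧
        ∀ S : Finset (Finset ℕ), S ⊆ F → 1 ≤ S.card → S.card ≤ t →
          (uDeg K S : ℝ) ≤ (β * a * (n : ℝ) ^ (k - ℓ - 1)) ^ (t - S.card) := by
  have hcardpos : 1 ≤ t := by
    rw [← hte]
    have : H.Nonempty := by
      have := hH.1
      cases this with
      | single E => exact ⟨E, by simp⟩
      | grow E Q _ _ _ _ => exact ⟨E, by simp⟩
    exact this.card_pos
  have hkR : (4 : ℝ) ≤ k := by exact_mod_cast hk
  have htR : (1 : ℝ) ≤ t := by exact_mod_cast hcardpos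
  obtain ⟨c, hc, hchoose⟩ : ∃ c : ℝ, 0 < c ∧ ∀ n ≥ 2 * k,
      c * (n : ℝ) ^ (k - 1) ≤ (n.choose (k - 1) : ℝ) := by
    refine ⟨1 / (2 ^ (k - 1) * (Nat.factorial (k - 1) : ℝ)), by positivity, ?_⟩
    intro n hn
    have h1 : ((n + 1 - (k - 1) : ℕ) ^ (k - 1) : ℝ) ≤
        ((Nat.factorial (k - 1) : ℝ) * n.choose (k - 1)) := by
      have := Nat.pow_sub_le_descFactorial n (k - 1)
      rw [Nat.descFactorial_eq_factorial_mul_choose] at this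
      exact_mod_cast this
    have h2 : (n : ℝ) / 2 ≤ ((n + 1 - (k - 1) : ℕ) : ℝ) := by
      rw [div_le_iff₀ (by norm_num)]
      have : n ≤ (n + 1 - (k - 1)) * 2 := by omega
      exact_mod_cast this
    have h3 := pow_le_pow_left₀ (by positivity) h2 (k - 1)
    have h4 := h3.trans h1
    rw [div_pow] at h4
    rw [div_mul_eq_mul_div, one_mul, div_le_iff₀ (by positivity)]
    rw [div_le_iff₀ (by positivity)] at h4
    linarith
  set β : ℝ := c / (16 * k * t * 2 ^ t) with hβdef
  have hβ : 0 < β := by positivity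
  have hβ1 : 2 ^ t * (2 * t * β) = c / (8 * k) := by
    rw [hβdef]; field_simp; norm_num
  have hβ2 : 2 * t * β ≤ c / 32 := by
    have h1 : 2 * t * β ≤ 2 ^ t * (2 * t * β) :=
      le_mul_of_one_le_left (by positivity) (one_le_pow₀ (by norm_num))
    rw [hβ1] at h1
    refine h1.trans ?_
    apply div_le_div_of_nonneg_left hc.le (by norm_num)
    linarith
  refine ⟨8 * k * (t * k + 1) / c + 1 / β, β, by positivity, hβ, 2 * k, ?_⟩
  intro n hn F a hF hFc ha
  have hn1 : 1 ≤ n := by omega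
  have hnR : (1 : ℝ) ≤ n := by exact_mod_cast hn1
  have hA1 : 8 * k * (t * k + 1) / c ≤ a := by
    have : 0 < 1 / β := by positivity
    linarith
  have hA2 : 1 / β ≤ a := by
    have : 0 < 8 * k * (t * k + 1) / c := by positivity
    linarith
  have ha0 : 0 < a := lt_of_lt_of_le (by positivity) hA2
  have hβa : 1 ≤ β * a := by
    rw [div_le_iff₀ hβ] at hA2
    linarith
  set N : ℝ := (n : ℝ) ^ (k - 1) with hN
  have hNpos : 0 < N := by positivity
  set d : ℝ := β * a * (n : ℝ) ^ (k - ℓ - 1) with hd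
  have hd1 : 1 ≤ d := by
    have : (1 : ℝ) ≤ (n : ℝ) ^ (k - ℓ - 1) := one_le_pow₀ hnR
    nlinarith
  have hFbig : c * a * N ≤ (F.card : ℝ) := by
    rw [hFc]
    have := mul_le_mul_of_nonneg_left (hchoose n hn) ha0.le
    linarith
  -- a maximal graded collection
  let good : Finset (Finset (Finset ℕ)) → Prop := fun K =>
    (∀ A ∈ K, A ⊆ F ∧ IsCopyOf H A) ∧
    ∀ S : Finset (Finset ℕ), S ⊆ F → 1 ≤ S.card → S.card ≤ t →
      (uDeg K S : ℝ) ≤ d ^ (t - S.card)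
  have hex : (F.powerset.powerset.filter good).Nonempty := by
    refine ⟨∅, Finset.mem_filter.2 ⟨by simp, by simp, ?_⟩⟩
    intro S _ _ _
    simp only [uDeg, Finset.filter_empty, Finset.card_empty, Nat.cast_zero]
    positivity
  obtain ⟨K, hK, hKmax⟩ := Finset.exists_max_image _ Finset.card hex
  obtain ⟨hKF, hKgr⟩ := (Finset.mem_filter.1 hK).2
  refine ⟨K, hKF, ?_, hKgr⟩
  by_contra hsmall
  push Not at hsmall
  have hKt : ∀ A ∈ K, A.card = t := by
    intro A hA
    obtain ⟨φ, hφ, rfl⟩ := (hKF A hA).2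
    rw [← hte]
    exact copy_card H φ hφ
  -- remove full edges
  let Y := F.filter fun v => Full t d K {v}
  let F' := F.filter fun v => ¬ Full t d K {v}
  have hYc : (Y.card : ℝ) ≤ c / 32 * a * N := by
    have h1 := full_count t d hd1 K hKt ∅ Y (by
      intro v hv
      refine ⟨by simp, ?_⟩
      have := (Finset.mem_filter.1 hv).2
      simpa using this)
    have h2 : uDeg K ∅ = K.card := by simp [uDeg]
    rw [h2, Finset.card_empty, zero_add] at h1
    have hpos : 0 < d ^ (t - 1) := by positivity
    have h3 := mul_le_mul_of_nonneg_left hsmall.le (by positivity : (0 : ℝ) ≤ 2 * t)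
    have h4 : (Y.card : ℝ) ≤ 2 * t * β * (a * N) := by
      refine le_of_mul_le_mul_right ?_ hpos
      linarith
    have h5 := mul_le_mul_of_nonneg_right hβ2 (by positivity : 0 ≤ a * N)
    linarith
  have hsplit : (Y.card : ℝ) + F'.card = F.card := by
    have : Y.card + F'.card = F.card := Finset.card_filter_add_card_filter_not _
    exact_mod_cast this
  have hF' : IsKGraphOn k n F' := fun E hE => hF E (Finset.mem_filter.1 hE).1
  have hcaN : 0 < c * a * N := by positivity
  obtain ⟨G, hGF', hGne, hGdeg⟩ := clean k n F' hF' (c * a / (4 * k)) (by positivity) (by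
    have : (k : ℝ) * (c * a / (4 * k)) * (n : ℝ) ^ (k - 1) = c * a * N / 4 := by
      rw [← hN]; field_simp
    rw [this]
    linarith)
  have hGk : IsKGraphOn k n G := fun E hE => hF' E (hGF' hE)
  have hGF : G ⊆ F := hGF'.trans (Finset.filter_subset _ _)
  have hGnf : ∀ v ∈ G, ¬ Full t d K {v} := fun v hv => (Finset.mem_filter.1 (hGF' hv)).2
  have hext := extension k ℓ t n hn1 G hGk (c * a / (4 * k)) (c * a / (8 * k)) (by positivity)
    (by
      have h1 : (8 * k * (t * k + 1) : ℝ) ≤ a * c := (div_le_iff₀ hc).1 hA1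
      have h2 : (t * k + 1 : ℝ) ≤ c * a / (8 * k) := by
        rw [le_div_iff₀ (by positivity)]
        linarith
      have h3 : c * a / (4 * k) = c * a / (8 * k) + c * a / (8 * k) := by
        field_simp; norm_num
      rw [h3]
      push_cast
      linarith) hGdeg (Adm t d K) (by
      intro T hT hTt hPT
      have h1 := bad_count t d hd1 K hKt G T hT hTt
        (fun T' hT' => hKgr T' (hT'.trans hGF)) hGnf hPT
      have h2 : 2 ^ t * (2 * t * d) = c * a / (8 * k) * (n : ℝ) ^ (k - ℓ - 1) := by
        have : 2 ^ t * (2 * t * d) = 2 ^ t * (2 * t * β) * (a * (n : ℝ) ^ (k - ℓ - 1)) := by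
          rw [hd]; ring
        rw [this, hβ1]; ring
      rwa [h2] at h1)
  obtain ⟨φ, hφ, hsub, hadm⟩ := embed k ℓ t G (fun E hE => (hGk E hE).2) hGne (Adm t d K)
    (by
      intro E hE T hT hTne
      rcases Finset.subset_singleton_iff.1 hT with rfl | rfl
      · simp at hTne
      · exact hGnf E hE) hext H hH.1 hH.2 hov hte.le
  set A := H.image fun E => E.image φ with hAdef
  have hAt : A.card = t := by rw [hAdef, copy_card H φ hφ, hte]
  have hAF : A ⊆ F := hsub.trans hGF
  have hAK : A ∉ K := by
    intro hmem
    apply hadm A Finset.Subset.rfl (by rw [← Finset.card_pos]; omega)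
    unfold Full
    rw [hAt, Nat.sub_self, pow_zero]
    have : 0 < uDeg K A := Finset.card_pos.2 ⟨A, Finset.mem_filter.2 ⟨hmem, Finset.Subset.rfl⟩⟩
    have : (0 : ℝ) < uDeg K A := by exact_mod_cast this
    linarith
  have hnew : insert A K ∈ F.powerset.powerset.filter good := by
    refine Finset.mem_filter.2 ⟨?_, ?_, ?_⟩
    · rw [Finset.mem_powerset]
      refine Finset.insert_subset (Finset.mem_powerset.2 hAF) ?_
      intro B hB
      exact Finset.mem_powerset.2 (hKF B hB).1
    · intro B hB
      rcases Finset.mem_insert.1 hB with rfl | hB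
      · exact ⟨hAF, φ, hφ, rfl⟩
      · exact hKF B hB
    · intro S hS hS1 hSt
      by_cases hSA : S ⊆ A
      · have h1 := hadm S hSA (Finset.card_pos.1 hS1)
        unfold Full at h1
        push Not at h1
        have h2 : (uDeg (insert A K) S : ℝ) ≤ (uDeg K S : ℝ) + 1 := by
          exact_mod_cast (uDeg_insert_le K A S).1
        exact h2.trans h1
      · rw [(uDeg_insert_le K A S).2 hSA]
        exact hKgr S hS hS1 hSt
  have := hKmax _ hnew
  rw [Finset.card_insert_of_notMem hAK] at this
  omega
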